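/- arXiv:1202.2881 — 2 statements merged into one kernel-verified Lean document; each statement's English description precedes it below -/
import Mathlib

section
/- For all probability vectors u, v in the K-simplex S_K with v_k > 0 for every k, the relative entropy satisfies H(u, v) ≤ ‖u − v‖ / (min_{1 ≤ k ≤ K} v_k). -/
open Finset Real

theorem mul_log_div_le_mul_sub_div {x y : ℝ} (hx : 0 ≤ x) (hy : 0 < y) :
    x * log (x / y) ≤ x * ((x - y) / y) := by
  -- Since `log 0 = 0` in Lean, at `x = 0` the bound fails without the factor `x`.
  rcases hx.eq_or_lt with rfl | hx
  · simp
  · have hlog : log (x / y) ≤ (x - y) / y := by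
      rw [sub_div, div_self hy.ne']
      exact log_le_sub_one_of_pos (div_pos hx hy)
    exact mul_le_mul_of_nonneg_left hlog hx.le

theorem mul_log_div_le_mul_abs_sub_div_of_le {x y c m : ℝ} (hx : 0 ≤ x) (hxc : x ≤ c)
    (hm : 0 < m) (hmy : m ≤ y) :
    x * log (x / y) ≤ c * (|x - y| / m) :=
  calc x * log (x / y) ≤ x * ((x - y) / y) :=
        mul_log_div_le_mul_sub_div hx (hm.trans_le hmy)
    _ ≤ x * (|x - y| / m) := by gcongr; exact le_abs_self _
    _ ≤ c * (|x - y| / m) := by gcongr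

theorem relative_entropy_le_l1_div_min_general {ι : Type*} {s : Finset ι} (hs : s.Nonempty)
    {u v : ι → ℝ} {c : ℝ} (hu : ∀ k ∈ s, 0 ≤ u k) (huc : ∀ k ∈ s, u k ≤ c)
    (hv : ∀ k ∈ s, 0 < v k) :
    ∑ k ∈ s, u k * log (u k / v k) ≤ c * ((∑ k ∈ s, |u k - v k|) / s.inf' hs v) := by
  have hmin : 0 < s.inf' hs v := (lt_inf'_iff hs).mpr hv
  rw [sum_div, mul_sum]
  exact sum_le_sum fun k hk =>
    mul_log_div_le_mul_abs_sub_div_of_le (hu k hk) (huc k hk) hmin (inf'_le v hk)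

/-- Upper bound on the relative entropy: for probability vectors `u, v` in the `K`-simplex
with `v` having positive entries, `H(u,v) ≤ ‖u - v‖₁ / min_k v_k`.
(The convention `0 * log 0 = 0` holds automatically since `Real.log 0 = 0`.) -/
theorem relative_entropy_le_l1_div_min
    (K : ℕ) (hK : 2 ≤ K) (u v : Fin K → ℝ)
    (hu0 : ∀ k, 0 ≤ u k) (hu1 : ∀ k, u k ≤ 1) (husum : ∑ k, u k = 1)
    (hv1 : ∀ k, v k ≤ 1) (hvsum : ∑ k, v k = 1) (hvpos : ∀ k, 0 < v k) :
    ∑ k, u k * Real.log (u k / v k)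
      ≤ (∑ k, |u k - v k|)
          / (Finset.univ.inf' (Finset.univ_nonempty_iff.mpr ⟨⟨0, by omega⟩⟩) v) := by
  simpa only [one_mul] using relative_entropy_le_l1_div_min_general _ (fun k _ => hu0 k)
    (fun k _ => hu1 k) (fun k _ => hvpos k)
end

section
/- Let K ≥ 2 be an integer and let η > 0. There exists A > 0 such that for every probability vector v on {1, …, K}, the (K−1)-dimensional Lebesgue measure of the set { u ∈ S : H(v, Lu) ≤ η } is at least A, where H(v, w) = Σ_{k=1}^K v_k·log(v_k/w_k) is the relative entropy (with the conventions 0·log 0 = 0 and v_k·log(v_k/0) = +∞ for v_k > 0). -/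
open MeasureTheory Finset

/-- The map `L` completing a point of
`S = {u ∈ [0,1]^{K-1} : u_1 + ⋯ + u_{K-1} ≤ 1}` into a probability vector on `{1,…,K}`. -/
noncomputable def completeToSimplex (K : ℕ) (u : Fin (K - 1) → ℝ) : Fin K → ℝ :=
  fun k => if h : (k : ℕ) < K - 1 then u ⟨k, h⟩ else 1 - ∑ j, u j

/-! If `w ≥ exp (-η) • v` coordinatewise, then `log (v k / w k) ≤ η` whenever `v k > 0`, so
`H(v, w) ≤ η`. Write `c = exp (-η)` and `n = K - 1`. Enlarging the first `n` coordinates of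
`c • v` by arbitrary amounts in `[0, δ]` uses up at most `n δ` of the missing mass `1 - c`, so for
`δ = (1 - c) / n` the completed vector still dominates `c • v`. The entropy ball thus contains a
cube of side `δ`, whose volume `δ ^ n` does not depend on `v`. -/

theorem mul_log_div_le_of_exp_neg_mul_le {a b η : ℝ} (ha : 0 ≤ a)
    (hab : Real.exp (-η) * a ≤ b) : a * Real.log (a / b) ≤ a * η := by
  rcases ha.eq_or_lt with rfl | ha_pos
  · simp
  have hb_pos : 0 < b := (by positivity : 0 < Real.exp (-η) * a).trans_le hab
  have hdiv : a / b ≤ Real.exp η := by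
    rwa [div_le_iff₀ hb_pos, ← inv_mul_le_iff₀ (Real.exp_pos η), ← Real.exp_neg]
  exact mul_le_mul_of_nonneg_left ((Real.log_le_iff_le_exp (by positivity)).2 hdiv) ha

theorem sum_mul_log_div_le_of_exp_neg_mul_le {ι : Type*} {s : Finset ι} {v w : ι → ℝ} {η : ℝ}
    (hv : ∀ k ∈ s, 0 ≤ v k) (hvw : ∀ k ∈ s, Real.exp (-η) * v k ≤ w k) :
    ∑ k ∈ s, v k * Real.log (v k / w k) ≤ (∑ k ∈ s, v k) * η := by
  rw [sum_mul]
  exact sum_le_sum fun k hk => mul_log_div_le_of_exp_neg_mul_le (hv k hk) (hvw k hk)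

theorem volume_Icc_add_const {ι : Type*} [Fintype ι] (a : ι → ℝ) (δ : ℝ) :
    volume (Set.Icc a fun j => a j + δ) = ENNReal.ofReal δ ^ Fintype.card ι := by
  simp [Real.volume_Icc_pi]

section completeToSimplex

variable {n : ℕ} (u : Fin n → ℝ)

theorem completeToSimplex_castSucc (j : Fin n) :
    completeToSimplex (n + 1) u j.castSucc = u j := by
  simp [completeToSimplex]

theorem completeToSimplex_last :
    completeToSimplex (n + 1) u (Fin.last n) = 1 - ∑ j, u j := by
  simp [completeToSimplex]

theorem completeToSimplex_nonneg_iff :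
    (∀ k, 0 ≤ completeToSimplex (n + 1) u k) ↔
      (∀ j, 0 ≤ u j ∧ u j ≤ 1) ∧ ∑ j, u j ≤ 1 := by
  simp only [Fin.forall_fin_succ', completeToSimplex_castSucc, completeToSimplex_last, sub_nonneg]
  refine ⟨fun ⟨hu, hsum⟩ => ⟨fun j => ⟨hu j, ?_⟩, hsum⟩,
    fun ⟨hu, hsum⟩ => ⟨fun j => (hu j).1, hsum⟩⟩
  exact (single_le_sum (fun i _ => hu i) (mem_univ j)).trans hsum

variable {u}

theorem mul_le_completeToSimplex_of_mem_Icc {v : Fin (n + 1) → ℝ} {c δ : ℝ}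
    (hmass : c * (∑ k, v k) + n * δ ≤ 1)
    (hu : u ∈ Set.Icc (fun j => c * v j.castSucc) (fun j => c * v j.castSucc + δ))
    (k : Fin (n + 1)) : c * v k ≤ completeToSimplex (n + 1) u k := by
  cases k using Fin.lastCases with
  | cast j => exact (hu.1 j).trans_eq (completeToSimplex_castSucc u j).symm
  | last =>
    have hsum : ∑ j, u j ≤ c * ((∑ k, v k) - v (Fin.last n)) + n * δ :=
      calc ∑ j, u j ≤ ∑ j : Fin n, (c * v j.castSucc + δ) := sum_le_sum fun j _ => hu.2 j
        _ = c * (∑ j : Fin n, v j.castSucc) + n * δ := by simp [sum_add_distrib, mul_sum]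
        _ = c * ((∑ k, v k) - v (Fin.last n)) + n * δ := by
          rw [Fin.sum_univ_castSucc, add_sub_cancel_right]
    rw [completeToSimplex_last]
    linarith

end completeToSimplex

/-- Uniform positive lower bound on the Lebesgue volume of relative-entropy balls:
for every `η > 0` there is `A > 0` such that for every probability vector `v` on
`{1,…,K}`, the set `{u ∈ S : H(v, Lu) ≤ η}` has (K-1)-dimensional Lebesgue measure
at least `A`.  (The convention `H(v,w) = +∞` when `w_k = 0 < v_k` is encoded by the
positivity requirement `0 < (Lu)_k` whenever `0 < v_k`.) -/
theorem volume_entropy_ball_uniform_lower_bound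
    (K : ℕ) (hK : 2 ≤ K) (η : ℝ) (hη : 0 < η) :
    ∃ A : ℝ, 0 < A ∧
      ∀ v : Fin K → ℝ, (∀ k, 0 ≤ v k) → (∀ k, v k ≤ 1) → ∑ k, v k = 1 →
        ENNReal.ofReal A ≤
          volume {u : Fin (K - 1) → ℝ |
            (∀ j, 0 ≤ u j ∧ u j ≤ 1) ∧ (∑ j, u j ≤ 1) ∧
            (∀ k, 0 < v k → 0 < completeToSimplex K u k) ∧
            ∑ k, v k * Real.log (v k / completeToSimplex K u k) ≤ η} := by
  obtain ⟨n, rfl⟩ : ∃ n, K = n + 1 := ⟨K - 1, by omega⟩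
  have hn : (0 : ℝ) < n := by exact_mod_cast (by omega : 0 < n)
  set c := Real.exp (-η)
  have hc_pos : 0 < c := Real.exp_pos _
  have hc_lt : c < 1 := Real.exp_lt_one_iff.2 (neg_neg_of_pos hη)
  set δ := (1 - c) / n
  have hδ_pos : 0 < δ := div_pos (sub_pos.2 hc_lt) hn
  have hδ : c + n * δ = 1 := by rw [mul_div_cancel₀ _ hn.ne', add_sub_cancel]
  refine ⟨δ ^ n, by positivity, fun v hv _ hv_sum => ?_⟩
  let cube : Set (Fin n → ℝ) :=
    Set.Icc (fun j => c * v j.castSucc) (fun j => c * v j.castSucc + δ)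
  have hcube : volume cube = ENNReal.ofReal (δ ^ n) := by
    rw [volume_Icc_add_const, Fintype.card_fin, ENNReal.ofReal_pow hδ_pos.le]
  refine hcube.ge.trans (measure_mono fun (u : Fin n → ℝ) hu => ?_)
  have hdom := mul_le_completeToSimplex_of_mem_Icc (by rw [hv_sum, mul_one, hδ]) hu
  obtain ⟨hu_mem, hu_sum⟩ := (completeToSimplex_nonneg_iff u).1 fun k =>
    (mul_nonneg hc_pos.le (hv k)).trans (hdom k)
  refine ⟨hu_mem, hu_sum, fun k hk => (mul_pos hc_pos hk).trans_le (hdom k), ?_⟩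
  simpa only [hv_sum, one_mul] using
    sum_mul_log_div_le_of_exp_neg_mul_le (s := univ) (fun k _ => hv k) fun k _ => hdom k
end
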